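/- Fix c, d₁ ≥ 0 and d₀ > 0 with d₀ + d₁ − c > 0. Then for all p, q, π ∈ (0,1), (c + p)(1−π) / (d₀ + (d₁−c)π + (1−q)(1−π)) ≤ (1+c) / min(d₀, d₀ + d₁ − c). Consequently, the robust F-score M_Frb satisfies the robustness condition (12) with constant c₂ = (1+c)/min(d₀, d₀+d₁−c), i.e. ∂_q M_Frb / ∂_p M_Frb ≤ c₂ for all π ∈ (0,1/2] and p, q ∈ (0,1). -/

import Mathlib

open Set

theorem robust_fscore_robustness
    (c d₀ d₁ : ℝ) (hc : 0 ≤ c) (hd₁ : 0 ≤ d₁) (hd₀ : 0 < d₀)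
    (hsum : 0 < d₀ + d₁ - c) (β : ℝ) (hβ : 0 < β)
    (M : ℝ → ℝ → ℝ → ℝ)
    (hM : ∀ p q π : ℝ, M p q π =
      ((d₀ / π + β ^ 2 + 1) / (1 + c)) *
        ((c * π + π * p) / (d₀ + d₁ * π + π * p + (1 - q) * (1 - π)))) :
    (∀ p q π : ℝ, p ∈ Ioo (0:ℝ) 1 → q ∈ Ioo (0:ℝ) 1 → π ∈ Ioo (0:ℝ) 1 →
      (c + p) * (1 - π) / (d₀ + (d₁ - c) * π + (1 - q) * (1 - π))
        ≤ (1 + c) / min d₀ (d₀ + d₁ - c)) ∧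
    (∀ p q π : ℝ, p ∈ Ioo (0:ℝ) 1 → q ∈ Ioo (0:ℝ) 1 → π ∈ Ioc (0:ℝ) (1/2) →
      deriv (fun q' => M p q' π) q / deriv (fun p' => M p' q π) p
        ≤ (1 + c) / min d₀ (d₀ + d₁ - c)) := by
  have key : ∀ p q π : ℝ, p ∈ Ioo (0:ℝ) 1 → q ∈ Ioo (0:ℝ) 1 → π ∈ Ioo (0:ℝ) 1 →
      0 < d₀ + (d₁ - c) * π + (1 - q) * (1 - π) ∧
      (c + p) * (1 - π) / (d₀ + (d₁ - c) * π + (1 - q) * (1 - π))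
        ≤ (1 + c) / min d₀ (d₀ + d₁ - c) := by
    rintro p q π ⟨hp0, hp1⟩ ⟨hq0, hq1⟩ ⟨h0, h1⟩
    have hm : 0 < min d₀ (d₀ + d₁ - c) := lt_min hd₀ hsum
    have hm1 := min_le_left d₀ (d₀ + d₁ - c)
    have hm2 := min_le_right d₀ (d₀ + d₁ - c)
    have e1 := mul_le_mul_of_nonneg_right hm1 (sub_pos.2 h1).le
    have e2 := mul_le_mul_of_nonneg_right hm2 h0.le
    have e3 := mul_pos (sub_pos.2 hq1) (sub_pos.2 h1)
    have hE : min d₀ (d₀ + d₁ - c) ≤ d₀ + (d₁ - c) * π + (1 - q) * (1 - π) := by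
      nlinarith
    refine ⟨by linarith, ?_⟩
    apply div_le_div₀ (by linarith) _ hm hE
    nlinarith [mul_nonneg (add_nonneg hc hp0.le) h0.le]
  refine ⟨fun p q π hp hq hπ => (key p q π hp hq hπ).2, ?_⟩
  intro p q π hp hq hπ
  have hπ' : π ∈ Ioo (0:ℝ) 1 := ⟨hπ.1, by linarith [hπ.2]⟩
  obtain ⟨hE, hle⟩ := key p q π hp hq hπ'
  have h0 := hπ.1
  have hK : 0 < (d₀ / π + β ^ 2 + 1) / (1 + c) := by positivity
  have hD : 0 < d₀ + d₁ * π + π * p + (1 - q) * (1 - π) := by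
    nlinarith [mul_nonneg hc h0.le, mul_pos h0 hp.1]
  simp only [hM]
  generalize (d₀ / π + β ^ 2 + 1) / (1 + c) = K at hK
  have dq : HasDerivAt (fun q' : ℝ => K * ((c * π + π * p) /
      (d₀ + d₁ * π + π * p + (1 - q') * (1 - π))))
      (K * ((0 * (d₀ + d₁ * π + π * p + (1 - q) * (1 - π)) - (c * π + π * p) * (-1 * (1 - π))) /
        (d₀ + d₁ * π + π * p + (1 - q) * (1 - π)) ^ 2)) q :=
    ((hasDerivAt_const q (c * π + π * p)).fun_div
      ((((hasDerivAt_id' q).const_sub 1).mul_const (1 - π)).const_add _) hD.ne').const_mul K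
  have dp : HasDerivAt (fun p' : ℝ => K * ((c * π + π * p') /
      (d₀ + d₁ * π + π * p' + (1 - q) * (1 - π))))
      (K * (((π * 1) * (d₀ + d₁ * π + π * p + (1 - q) * (1 - π)) - (c * π + π * p) * (π * 1)) /
        (d₀ + d₁ * π + π * p + (1 - q) * (1 - π)) ^ 2)) p :=
    ((((hasDerivAt_id' p).const_mul π).const_add _).fun_div
      ((((hasDerivAt_id' p).const_mul π).const_add _).add_const _) hD.ne').const_mul K
  rw [dq.deriv, dp.deriv]
  refine le_of_eq_of_le ?_ hle
  generalize hDD : d₀ + d₁ * π + π * p + (1 - q) * (1 - π) = D at hD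
  generalize hEE : d₀ + (d₁ - c) * π + (1 - q) * (1 - π) = E at hE
  have hDE : D = E + (c * π + π * p) := by rw [← hDD, ← hEE]; ring
  have a1 : K * ((0 * D - (c * π + π * p) * (-1 * (1 - π))) / D ^ 2)
      = (K * π / D ^ 2) * ((c + p) * (1 - π)) := by ring
  have a2 : K * (((π * 1) * D - (c * π + π * p) * (π * 1)) / D ^ 2)
      = (K * π / D ^ 2) * E := by
    have : E = D - (c * π + π * p) := by linarith
    rw [this]; ring
  rw [a1, a2]
  exact mul_div_mul_left _ _ (by positivity)
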